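/- Let β > 0, ω > 0 and u ∈ (0, β). Then the symmetric partial sums Σ_{η=-N}^{N} e^{i (2π/β) η u} / ( β ( ω + i (2π/β) η ) ) converge, as N → ∞, to e^{-uω} / ( 1 - e^{-βω} ). -/

import Mathlib

open Filter

/-!
Up to the factor `1 - e^{-βω}`, the summands are the terms of the Fourier series of
`t ↦ e^{-ωt}` on `(0, β]`, which is differentiable at the interior point `u`.

Pointwise convergence at such a point `x` is P. Chernoff's argument. Write `e t = e^{2πit/T}`. If
`f t = f x + (e t - e x) g t` with `g` integrable, then the `n`-th Fourier coefficient of `f - f x`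
is `ĝ (n - 1) - e x * ĝ n`, so its symmetric partial sums at `x` telescope to two boundary terms,
which vanish in the limit by the Riemann–Lebesgue lemma. The quotient `g` is integrable because it
is bounded near `x`, while away from `x` its denominator is bounded below.
-/

theorem sum_Icc_neg_sub_succ {M : Type*} [AddCommGroup M] (F : ℤ → M) (N : ℕ) :
    ∑ n ∈ Finset.Icc (-(N : ℤ)) N, (F n - F (n + 1)) = F (-N) - F (N + 1) := by
  induction N with
  | zero => simp
  | succ N ih =>
    push_cast
    rw [Finset.sum_Icc_succ_eq_add_endpoints, ih, neg_add_rev, neg_add_cancel_comm]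
    abel

section Circle

open Asymptotics MeasureTheory AddCircle Topology
open scoped FourierTransform

variable {T : ℝ} [hT : Fact (0 < T)] {E : Type*} [NormedAddCommGroup E] [NormedSpace ℂ E]

theorem tendsto_fourierCoeff_cofinite (f : AddCircle T → E) :
    Tendsto (fourierCoeff f) cofinite (𝓝 0) := by
  let F : ℝ → E := (Set.Ioc 0 (0 + T)).indicator fun t => f t
  have coeff_eq (n : ℤ) : fourierCoeff f n = (1 / T) • ∫ t, 𝐞 (-(t * (n / T))) • F t := by
    have zero_le_period : (0 : ℝ) ≤ 0 + T := by simpa using hT.out.le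
    rw [fourierCoeff_eq_intervalIntegral f n 0, intervalIntegral.integral_of_le zero_le_period,
      ← integral_indicator measurableSet_Ioc]
    congr 2 with t
    by_cases ht : t ∈ Set.Ioc 0 (0 + T)
    · simp only [F, Set.indicator_of_mem ht, fourier_coe_apply, Circle.smul_def,
        Real.fourierChar_apply]
      congr 2
      push_cast
      ring
    · simp only [F, Set.indicator_of_notMem ht, smul_zero]
  have frequency_tendsto : Tendsto (fun n : ℤ => (n / T : ℝ)) cofinite (cocompact ℝ) :=
    (Homeomorph.mulRight₀ T⁻¹ (inv_ne_zero hT.out.ne')).isClosedEmbedding.tendsto_cocompact.comp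
      Int.tendsto_coe_cofinite
  rw [funext coeff_eq]
  simpa only [smul_zero, Function.comp_apply] using
    ((Real.tendsto_integral_exp_smul_cocompact F).comp frequency_tendsto).const_smul (1 / T)

theorem tendsto_fourier_smul_fourierCoeff_cofinite {ι : Type*} (f : AddCircle T → E)
    (x : AddCircle T) (m : ι → ℤ) {k : ι → ℤ} (hk : Function.Injective k) :
    Tendsto (fun i => fourier (m i) x • fourierCoeff f (k i)) cofinite (𝓝 0) := by
  have norm_coeff := ((tendsto_fourierCoeff_cofinite f).comp hk.tendsto_cofinite).norm
  rw [tendsto_zero_iff_norm_tendsto_zero]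
  simpa only [norm_smul, fourier_apply, Circle.norm_coe, one_mul, norm_zero,
    Function.comp_apply] using norm_coeff

theorem fourierCoeff_fourier_smul (f : AddCircle T → E) (m n : ℤ) :
    fourierCoeff (fun t => fourier m t • f t) n = fourierCoeff f (n - m) := by
  simp only [fourierCoeff, smul_smul, ← fourier_add, neg_sub', sub_neg_eq_add]

theorem fourierCoeff_fourier_one_sub_smul {g : AddCircle T → E} (hg : Integrable g haarAddCircle)
    (z : ℂ) (n : ℤ) :
    fourierCoeff (fun t => (fourier 1 t - z) • g t) n =
      fourierCoeff g (n - 1) - z • fourierCoeff g n := by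
  have split : (fun t => (fourier 1 t - z) • g t) = (fun t => fourier 1 t • g t) + (-z) • g := by
    ext t
    simp only [Pi.add_apply, Pi.smul_apply]
    module
  rw [split, fourierCoeff.add (hg.fourier_smul 1) (hg.smul _), Pi.add_apply,
    fourierCoeff_fourier_smul, fourierCoeff.const_smul]
  module

theorem sum_fourier_smul_fourierCoeff_fourier_one_sub_smul {g : AddCircle T → E}
    (hg : Integrable g haarAddCircle) (x : AddCircle T) (N : ℕ) :
    ∑ n ∈ Finset.Icc (-(N : ℤ)) N,
        fourier n x • fourierCoeff (fun t => (fourier 1 t - fourier 1 x) • g t) n =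
      fourier (-N) x • fourierCoeff g (-N - 1) - fourier (N + 1) x • fourierCoeff g N := by
  have difference (n : ℤ) :
      fourier n x • fourierCoeff (fun t => (fourier 1 t - fourier 1 x) • g t) n =
        fourier n x • fourierCoeff g (n - 1) - fourier (n + 1) x • fourierCoeff g (n + 1 - 1) := by
    rw [fourierCoeff_fourier_one_sub_smul hg, smul_sub, smul_smul, ← fourier_add,
      add_sub_cancel_right]
  rw [Finset.sum_congr rfl fun n _ => difference n,
    sum_Icc_neg_sub_succ fun n => fourier n x • fourierCoeff g (n - 1), add_sub_cancel_right]

theorem fourierCoeff_const [CompleteSpace E] (c : E) :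
    fourierCoeff (fun _ : AddCircle T => c) = Pi.single 0 c := by
  ext n
  calc fourierCoeff (fun _ : AddCircle T => c) n
      = fourierCoeff (fourier 0 : AddCircle T → ℂ) n • c := by
        simp only [fourierCoeff, fourier_zero, smul_eq_mul, mul_one, integral_smul_const]
    _ = Pi.single (M := fun _ => E) 0 c n := by
        rw [fourierCoeff_fourier]
        rcases eq_or_ne n 0 with rfl | hn <;> simp [*]

theorem sum_fourier_smul_fourierCoeff_const [CompleteSpace E] (c : E) (x : AddCircle T) (N : ℕ) :
    ∑ n ∈ Finset.Icc (-(N : ℤ)) N, fourier n x • fourierCoeff (fun _ : AddCircle T => c) n = c := by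
  rw [fourierCoeff_const, Finset.sum_eq_single_of_mem 0 (by simp)]
  · rw [fourier_zero, Pi.single_eq_same, one_smul]
  · intro n _ hn
    rw [Pi.single_eq_of_ne hn, smul_zero]

theorem tendsto_sum_fourier_smul_fourierCoeff_of_eq_add [CompleteSpace E] {f g : AddCircle T → E}
    {x : AddCircle T} {c : E} (hg : Integrable g haarAddCircle)
    (hfg : ∀ t, f t = c + (fourier 1 t - fourier 1 x) • g t) :
    Tendsto (fun N : ℕ => ∑ n ∈ Finset.Icc (-(N : ℤ)) N, fourier n x • fourierCoeff f n)
      atTop (𝓝 c) := by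
  have integrable_remainder :
      Integrable (fun t => (fourier 1 t - fourier 1 x) • g t) haarAddCircle := by
    simp only [sub_smul]
    exact (hg.fourier_smul 1).sub (hg.smul _)
  have coeff_eq (n : ℤ) : fourierCoeff f n = fourierCoeff (fun _ : AddCircle T => c) n +
      fourierCoeff (fun t => (fourier 1 t - fourier 1 x) • g t) n := by
    rw [funext hfg]
    exact congrFun (fourierCoeff.add (integrable_const c) integrable_remainder) n
  simp only [coeff_eq, smul_add, Finset.sum_add_distrib, sum_fourier_smul_fourierCoeff_const,
    sum_fourier_smul_fourierCoeff_fourier_one_sub_smul hg]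
  have lower_end := tendsto_fourier_smul_fourierCoeff_cofinite g x (fun N : ℕ => -N)
    (k := fun N => -N - 1) fun M N h => by simpa using h
  have upper_end := tendsto_fourier_smul_fourierCoeff_cofinite g x (fun N : ℕ => N + 1)
    (k := fun N => N) Nat.cast_injective
  simpa only [Nat.cofinite_eq_atTop, sub_zero, add_zero] using
    (lower_end.sub upper_end).const_add c

theorem fourier_one_injective : Function.Injective (fourier 1 : AddCircle T → ℂ) := by
  intro s t h
  simp only [fourier_one] at h
  exact injective_toCircle hT.out.ne' (Subtype.val_injective h)

theorem integrable_inv_fourier_one_sub_smul {f : AddCircle T → E} {x : AddCircle T} {c : E}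
    (hf : Integrable f haarAddCircle)
    (hfx : (fun t => f t - c) =O[𝓝 x] fun t => fourier 1 t - fourier 1 x) :
    Integrable (fun t => (fourier 1 t - fourier 1 x)⁻¹ • (f t - c)) haarAddCircle := by
  set g : AddCircle T → E := fun t => (fourier 1 t - fourier 1 x)⁻¹ • (f t - c)
  have integrable_sub : Integrable (fun t => f t - c) haarAddCircle := hf.sub (integrable_const c)
  have measurable_inv : Measurable fun t : AddCircle T => (fourier 1 t - fourier 1 x)⁻¹ := by
    fun_prop
  have measurable_g : AEStronglyMeasurable g haarAddCircle :=
    measurable_inv.aestronglyMeasurable.smul integrable_sub.aestronglyMeasurable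
  rw [← integrableOn_univ]
  refine LocallyIntegrable.integrableOn_isCompact (fun t => ?_) isCompact_univ
  rcases eq_or_ne t x with rfl | htx
  · have bounded_near : g =O[𝓝 t] fun _ => (1 : ℝ) := by
      refine ((isBigO_refl _ _).smul hfx).trans (.of_bound 1 (.of_forall fun s => ?_))
      simpa [-fourier_apply] using inv_mul_le_one
    exact bounded_near.integrableAtFilter measurable_g.stronglyMeasurableAtFilter
      ((integrable_const 1).integrableAtFilter _)
  · have denominator_ne : fourier 1 t - fourier 1 x ≠ 0 :=
      sub_ne_zero.2 (fourier_one_injective.ne htx)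
    have continuousAt_inv : ContinuousAt (fun s => (fourier 1 s - fourier 1 x : ℂ)⁻¹) t :=
      ContinuousAt.inv₀ (by fun_prop) denominator_ne
    have dominated_near : g =O[𝓝 t] fun s => f s - c := by
      simpa only [one_smul] using
        (continuousAt_inv.isBigO_one ℝ).smul (isBigO_refl (fun s => f s - c) (𝓝 t))
    exact dominated_near.integrableAtFilter measurable_g.stronglyMeasurableAtFilter
      (integrable_sub.integrableAtFilter _)

theorem tendsto_sum_fourier_smul_fourierCoeff_of_isBigO [CompleteSpace E] {f : AddCircle T → E}
    {x : AddCircle T} (hf : Integrable f haarAddCircle)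
    (hfx : (fun t => f t - f x) =O[𝓝 x] fun t => fourier 1 t - fourier 1 x) :
    Tendsto (fun N : ℕ => ∑ n ∈ Finset.Icc (-(N : ℤ)) N, fourier n x • fourierCoeff f n)
      atTop (𝓝 (f x)) := by
  refine tendsto_sum_fourier_smul_fourierCoeff_of_eq_add
    (integrable_inv_fourier_one_sub_smul hf hfx) fun t => ?_
  rcases eq_or_ne t x with rfl | htx
  · rw [sub_self, zero_smul, add_zero]
  · rw [smul_inv_smul₀ (sub_ne_zero.2 (fourier_one_injective.ne htx)), add_sub_cancel]

theorem integrable_liftIoc_haarAddCircle {F : Type*} [NormedAddCommGroup F] {a : ℝ} {f : ℝ → F}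
    (hf : IntegrableOn f (Set.Ioc a (a + T))) : Integrable (liftIoc T a f) haarAddCircle := by
  have integrable_volume : Integrable (liftIoc T a f) :=
    ((measurePreserving_subtype_coe measurableSet_Ioc).comp
      (measurePreserving_equivIoc T)).integrable_comp_of_integrable hf
  rwa [volume_eq_smul_haarAddCircle, integrable_smul_measure (by simpa using hT.out)
    ENNReal.ofReal_ne_top] at integrable_volume

theorem isBigO_sub_fourier_one_sub (x : ℝ) :
    (fun t : ℝ => t - x) =O[𝓝 x]
      fun t => fourier 1 (t : AddCircle T) - fourier 1 (x : AddCircle T) := by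
  have deriv_ne : 2 * Real.pi * Complex.I * (1 : ℤ) / T * fourier 1 (x : AddCircle T) ≠ 0 := by
    simp [hT.out.ne', Real.pi_ne_zero]
  have sub_isBigO := ((hasDerivAt_fourier T 1 x).isTheta_sub deriv_ne).isBigO_symm
  rwa [Filter.prod_pure, isBigO_map] at sub_isBigO

end Circle

section Interval

open Asymptotics MeasureTheory AddCircle Topology Complex

variable {a b : ℝ} (hab : a < b)

theorem tendsto_sum_fourier_smul_fourierCoeffOn_of_differentiableAt {E : Type*}
    [NormedAddCommGroup E] [NormedSpace ℂ E] [CompleteSpace E] {x : ℝ} {f : ℝ → E}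
    (hf : IntegrableOn f (Set.Ioc a b)) (hx : x ∈ Set.Ioo a b) (hfx : DifferentiableAt ℝ f x) :
    Tendsto (fun N : ℕ => ∑ n ∈ Finset.Icc (-(N : ℤ)) N,
        fourier n (x : AddCircle (b - a)) • fourierCoeffOn hab f n) atTop (𝓝 (f x)) := by
  have : Fact (0 < b - a) := ⟨sub_pos.2 hab⟩
  have add_period : a + (b - a) = b := add_sub_cancel a b
  have lift_eq {t : ℝ} (ht : t ∈ Set.Ioo a b) : liftIoc (b - a) a f t = f t :=
    liftIoc_coe_apply (by rw [add_period]; exact Set.Ioo_subset_Ioc_self ht)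
  have integrable_lift : Integrable (liftIoc (b - a) a f) haarAddCircle :=
    integrable_liftIoc_haarAddCircle (by rwa [add_period])
  have lift_isBigO : (fun t => liftIoc (b - a) a f t - liftIoc (b - a) a f x) =O[𝓝 ↑x]
      fun t => fourier 1 t - fourier 1 (x : AddCircle (b - a)) := by
    rw [QuotientAddGroup.nhds_eq, isBigO_map]
    refine (hfx.isBigO_sub.trans (isBigO_sub_fourier_one_sub x)).congr' ?_ .rfl
    filter_upwards [Ioo_mem_nhds hx.1 hx.2] with t ht
    rw [Function.comp_apply, lift_eq ht, lift_eq hx]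
  rw [← lift_eq hx]
  exact tendsto_sum_fourier_smul_fourierCoeff_of_isBigO integrable_lift lift_isBigO

theorem fourierCoeffOn_exp_mul {c : ℂ} {n : ℤ} (hc : c * (b - a) - 2 * Real.pi * I * n ≠ 0) :
    fourierCoeffOn hab (fun t : ℝ => exp (c * t)) n =
      fourier (-n) (a : AddCircle (b - a)) * (exp (c * b) - exp (c * a)) /
        (c * (b - a) - 2 * Real.pi * I * n) := by
  have period_ne : (b - a : ℂ) ≠ 0 := by exact_mod_cast (sub_pos.2 hab).ne'
  set d : ℂ := c - 2 * Real.pi * I * n / (b - a) with hd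
  have d_mul_period : d * (b - a) = c * (b - a) - 2 * Real.pi * I * n := by
    rw [hd]
    field_simp
  have d_ne : d ≠ 0 := left_ne_zero_of_mul (d_mul_period ▸ hc)
  have integrand_eq (t : ℝ) :
      fourier (-n) (t : AddCircle (b - a)) • exp (c * t) = exp (d * t) := by
    rw [fourier_coe_apply, smul_eq_mul, ← exp_add, hd]
    congr 1
    push_cast
    ring
  have endpoints_eq : (b : AddCircle (b - a)) = a := by
    rw [← coe_add_period (b - a) a, add_sub_cancel]
  rw [fourierCoeffOn_eq_integral]
  simp only [integrand_eq]
  rw [integral_exp_mul_complex d_ne, ← integrand_eq, ← integrand_eq, endpoints_eq,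
    ← d_mul_period, real_smul]
  push_cast
  simp only [smul_eq_mul]
  field_simp

end Interval

theorem fourier_mul_fourierCoeffOn_exp_neg_mul {β : ℝ} (hβ : 0 < β) {ω : ℂ}
    (hω : Complex.exp (-β * ω) ≠ 1) (u : ℝ) (n : ℤ) :
    fourier n (u : AddCircle (β - 0)) *
        fourierCoeffOn hβ (fun t : ℝ => Complex.exp (-ω * t)) n =
      Complex.exp (Complex.I * ((2 * Real.pi / β : ℝ) : ℂ) * (n : ℂ) * (u : ℂ)) /
          ((β : ℂ) * (ω + Complex.I * ((2 * Real.pi / β : ℝ) : ℂ) * (n : ℂ))) *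
        (1 - Complex.exp (-β * ω)) := by
  have β_ne : (β : ℂ) ≠ 0 := by exact_mod_cast hβ.ne'
  have not_resonant : -ω * (β - (0 : ℝ)) - 2 * Real.pi * Complex.I * n ≠ 0 := by
    intro resonant
    refine hω (Complex.exp_eq_one_iff.2 ⟨n, ?_⟩)
    push_cast at resonant
    linear_combination resonant
  have denominator_eq : (β : ℂ) * (ω + Complex.I * ((2 * Real.pi / β : ℝ) : ℂ) * n) =
      -(-ω * (β - (0 : ℝ)) - 2 * Real.pi * Complex.I * n) := by
    push_cast
    field_simp
    ring
  have phase_eq : fourier n (u : AddCircle (β - 0)) =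
      Complex.exp (Complex.I * ((2 * Real.pi / β : ℝ) : ℂ) * n * u) := by
    rw [fourier_coe_apply]
    congr 1
    push_cast
    ring
  rw [fourierCoeffOn_exp_mul hβ not_resonant, denominator_eq, phase_eq, AddCircle.coe_zero,
    fourier_eval_zero, Complex.ofReal_zero, mul_zero, Complex.exp_zero,
    show -ω * (β : ℂ) = -β * ω by ring, div_neg]
  ring

theorem matsubara_symmetric_partial_sums_general {β u : ℝ} {ω : ℂ} (hu : u ∈ Set.Ioo 0 β)
    (hω : Complex.exp (-β * ω) ≠ 1) :
    Tendsto (fun N : ℕ =>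
        ∑ η ∈ Finset.Icc (-(N : ℤ)) (N : ℤ),
          Complex.exp (Complex.I * ((2 * Real.pi / β : ℝ) : ℂ) * (η : ℂ) * (u : ℂ)) /
            ((β : ℂ) * (ω + Complex.I * ((2 * Real.pi / β : ℝ) : ℂ) * (η : ℂ))))
      atTop (nhds (Complex.exp (-u * ω) / (1 - Complex.exp (-β * ω)))) := by
  have hβ : 0 < β := hu.1.trans hu.2
  have series := tendsto_sum_fourier_smul_fourierCoeffOn_of_differentiableAt hβ
    (f := fun t : ℝ => Complex.exp (-ω * t)) (Continuous.integrableOn_Ioc (by fun_prop)) hu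
    (by fun_prop)
  simp only [smul_eq_mul, fourier_mul_fourierCoeffOn_exp_neg_mul hβ hω, ← Finset.sum_mul] at series
  have factor_ne : 1 - Complex.exp (-β * ω) ≠ 0 := sub_ne_zero.2 hω.symm
  rw [show -(u : ℂ) * ω = -ω * u by ring]
  simpa only [mul_div_cancel_right₀ _ factor_ne] using
    series.div_const (1 - Complex.exp (-β * ω))

/-- Fourier-series expansion in imaginary time of a single positive-frequency
mode of the thermal two-point function: for `β > 0`, `ω > 0` and `u ∈ (0, β)`, the
symmetric partial sums `Σ_{η=-N}^{N} e^{i(2π/β)ηu} / (β(ω + i(2π/β)η))` converge to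
`e^{-uω} / (1 - e^{-βω})` as `N → ∞`. -/
theorem matsubara_symmetric_partial_sums (β ω u : ℝ) (hβ : 0 < β) (hω : 0 < ω)
    (hu : u ∈ Set.Ioo 0 β) :
    Tendsto (fun N : ℕ =>
        ∑ η ∈ Finset.Icc (-(N : ℤ)) (N : ℤ),
          Complex.exp (Complex.I * ((2 * Real.pi / β : ℝ) : ℂ) * (η : ℂ) * (u : ℂ)) /
            ((β : ℂ) * ((ω : ℂ) + Complex.I * ((2 * Real.pi / β : ℝ) : ℂ) * (η : ℂ))))
      atTop (nhds ((Real.exp (-u * ω) / (1 - Real.exp (-β * ω)) : ℝ) : ℂ)) := by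
  have exp_ne_one : Real.exp (-β * ω) ≠ 1 := by simp [hβ.ne', hω.ne']
  exact_mod_cast matsubara_symmetric_partial_sums_general hu (ω := ω) (by exact_mod_cast exp_ne_one)
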